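/- Let D be a cone metric on X and d the induced real-valued function d(x,y) = inf{‖u‖ : u ∈ E, D(x,y) ≤ u}. Then for all x,y ∈ X one has d(x,y) ≥ 0, and d(x,y) = 0 if and only if x = y. -/

import Mathlib

/-! If the infimum `d(x,y)` vanishes, there are upper bounds `u` of `D x y` of arbitrarily small norm,
so the points `u - D x y` of `P` come arbitrarily close to `-D x y`. Since `P` is closed,
`-D x y ∈ P`; as also `D x y ∈ P`, pointedness of the cone gives `D x y = 0`, that is `x = y`.
Conversely, if `x = y` then `u = 0` is admissible in the infimum. -/

open Filter Topology

/-- A cone in a real Banach space `E`. -/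
structure IsCone (E : Type*) [NormedAddCommGroup E] [NormedSpace ℝ E] (P : Set E) : Prop where
  closed : IsClosed P
  nonempty : P.Nonempty
  ne_singleton_zero : P ≠ {0}
  combo_mem : ∀ a b : ℝ, 0 ≤ a → 0 ≤ b → ∀ x y : E, x ∈ P → y ∈ P → a • x + b • y ∈ P
  eq_zero_of_mem_of_neg_mem : ∀ x : E, x ∈ P → -x ∈ P → x = 0

/-- `x ≤ y` with respect to the cone `P`, i.e. `y - x ∈ P`. -/
def coneLe {E : Type*} [NormedAddCommGroup E] (P : Set E) (x y : E) : Prop :=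
  y - x ∈ P

/-- `x ≪ y` with respect to the cone `P`, i.e. `y - x ∈ interior P`. -/
def coneLt {E : Type*} [NormedAddCommGroup E] (P : Set E) (x y : E) : Prop :=
  y - x ∈ interior P

/-- `D : X × X → E` is a cone metric with respect to the cone `P`. -/
structure IsConeMetric {E : Type*} [NormedAddCommGroup E] (P : Set E)
    {X : Type*} (D : X → X → E) : Prop where
  nonneg : ∀ x y : X, coneLe P 0 (D x y)
  eq_zero_iff : ∀ x y : X, (D x y = 0 ↔ x = y)
  symm : ∀ x y : X, D x y = D y x
  triangle : ∀ x y z : X, coneLe P (D x y) (D x z + D z y)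

/-- The induced real-valued function `d(x,y) = inf {‖u‖ : D x y ≤ u}`. -/
noncomputable def inducedDist {E : Type*} [NormedAddCommGroup E] (P : Set E)
    {X : Type*} (D : X → X → E) (x y : X) : ℝ :=
  sInf {r : ℝ | ∃ u : E, r = ‖u‖ ∧ coneLe P (D x y) u}

theorem stmt0 {E X : Type*} [NormedAddCommGroup E] [NormedSpace ℝ E] [CompleteSpace E]
    [Nonempty X] (P : Set E) (hP : IsCone E P) (hPint : (interior P).Nonempty)
    (D : X → X → E) (hD : IsConeMetric P D) (x y : X) :
    0 ≤ inducedDist P D x y ∧ (inducedDist P D x y = 0 ↔ x = y) := by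
  have hbdd : ∀ r ∈ {r : ℝ | ∃ u : E, r = ‖u‖ ∧ coneLe P (D x y) u}, 0 ≤ r := by
    rintro r ⟨u, rfl, -⟩
    exact norm_nonneg u
  have h0 : 0 ≤ inducedDist P D x y := Real.sInf_nonneg hbdd
  have hDP : D x y ∈ P := by simpa [coneLe] using hD.nonneg x y
  refine ⟨h0, fun h => ?_, fun h => ?_⟩
  · rw [← hD.eq_zero_iff]
    refine hP.eq_zero_of_mem_of_neg_mem _ hDP ?_
    rw [← hP.closed.closure_eq, Metric.mem_closure_iff]
    intro ε hε
    -- `u = D x y` witnesses nonemptiness, so the infimum is not a junk value; `D x y - D x y = 0 ∈ P`.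
    have hne : {r : ℝ | ∃ u : E, r = ‖u‖ ∧ coneLe P (D x y) u}.Nonempty :=
      ⟨_, D x y, rfl, by
        simpa [coneLe] using hP.combo_mem 0 0 le_rfl le_rfl _ _ hDP hDP⟩
    have hlt : sInf {r : ℝ | ∃ u : E, r = ‖u‖ ∧ coneLe P (D x y) u} < ε := by
      have h' : sInf {r : ℝ | ∃ u : E, r = ‖u‖ ∧ coneLe P (D x y) u} = 0 := h
      rwa [h']
    obtain ⟨_, ⟨u, rfl, hu⟩, huε⟩ := exists_lt_of_csInf_lt hne hlt
    refine ⟨u - D x y, hu, ?_⟩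
    rw [dist_eq_norm]
    have : -D x y - (u - D x y) = -u := by abel
    rwa [this, norm_neg]
  · refine le_antisymm (csInf_le ⟨0, hbdd⟩ ⟨0, norm_zero.symm, ?_⟩) h0
    have hz : D x y = 0 := (hD.eq_zero_iff x y).2 h
    rw [hz] at hDP
    simpa [coneLe, hz] using hDP
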